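/- Let n ≥ 1, let λ_1, …, λ_n be distinct real numbers with λ_j > −1/2, define K_n(x) = ∑_{j=1}^n a_{j,n} x^{λ_j} with a_{j,n} = (∏_{l=1}^n (λ_j + λ_l + 1)) / (∏_{l=1, l≠j}^n (λ_j − λ_l)), and ρ_n(x) = 1 − ∫_1^x K_n(1/r) (dr/r) for x ≥ 1. Then for every real a ≥ 1, ∫_0^1 ρ_n(a/v) ρ_n(1/v) dv = 1. -/

import Mathlib

open Finset MeasureTheory intervalIntegral

/-- The coefficients `a_{j,n}` of the Müntz polynomial `K_n`. -/
noncomputable def muntzA (lam : ℕ → ℝ) (n j : ℕ) : ℝ :=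
  (∏ l ∈ Finset.Icc 1 n, (lam j + lam l + 1)) /
    (∏ l ∈ (Finset.Icc 1 n).erase j, (lam j - lam l))

/-- The Müntz polynomial `K_n(x) = ∑_{j=1}^n a_{j,n} x^{λ_j}`. -/
noncomputable def muntzK (lam : ℕ → ℝ) (n : ℕ) (x : ℝ) : ℝ :=
  ∑ j ∈ Finset.Icc 1 n, muntzA lam n j * x ^ lam j

/-- `ρ_n(x) = 1 - ∫_1^x K_n(1/r) dr/r` for `x ≥ 1`. -/
noncomputable def muntzRho (lam : ℕ → ℝ) (n : ℕ) (x : ℝ) : ℝ :=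
  1 - ∫ r in (1:ℝ)..x, muntzK lam n (1 / r) / r

/-!
Put `S v = ρ_n (1 / v)`, so that `v * S' v = K_n v` and `S 1 = 1`. Integrating the derivative of
`v ^ (p + 1) * S v` over `(0, 1]` gives `(p + 1) * ∫ v ^ p * S v = 1 - ∫ v ^ p * K_n v`. The
coefficients `a_{j,n}` solve the Cauchy system `∑ k, a_{k,n} / (λ_j + λ_k + 1) = 1`, which says that
the right-hand side vanishes at `p = λ_j`: `S` is orthogonal to every `v ^ λ_j`, hence to `K_n`.
Integrating the derivative of `v * S v ^ 2` then gives `∫ S ^ 2 = 1`. As `K_n` is a combination of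
the `v ^ λ_j`, so is `ρ_n (a / v) - S v`, and replacing one factor of `S ^ 2` by `ρ_n (a / v)` does
not change the integral.
-/

open Filter
open scoped Topology

theorem sum_prod_sub_div_prod_erase_sub_eq_one {F ι κ : Type*} [Field F] [DecidableEq ι]
    {s : Finset ι} {t : Finset κ} {x : ι → F} (hx : Set.InjOn x s) (y : κ → F)
    (hcard : #t + 1 = #s) :
    ∑ i ∈ s, (∏ k ∈ t, (x i - y k)) / ∏ j ∈ s.erase i, (x i - x j) = 1 := by
  set P : Polynomial F := ∏ k ∈ t, (Polynomial.X - Polynomial.C (y k))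
  have hmonic : P.Monic := Polynomial.monic_prod_X_sub_C _ _
  have hdeg : (#s : WithBot ℕ) = P.degree + 1 := by
    rw [Polynomial.degree_eq_natDegree hmonic.ne_zero,
      Polynomial.natDegree_finsetProd_X_sub_C_eq_card, ← hcard]
    norm_cast
  have hlead := Lagrange.leadingCoeff_eq_sum hx hdeg
  simpa only [hmonic.leadingCoeff, P, Polynomial.eval_prod, Polynomial.eval_sub, Polynomial.eval_X,
    Polynomial.eval_C] using hlead.symm

theorem memLp_two_rpow {p : ℝ} (hp : -(1 / 2) < p) (b : ℝ) :
    MemLp (fun v : ℝ => v ^ p) 2 (volume.restrict (Set.Ioc 0 b)) := by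
  have hsq : IntegrableOn (fun v : ℝ => v ^ (p * 2)) (Set.Ioc 0 b) :=
    (intervalIntegrable_rpow' (by linarith)).1
  refine (memLp_two_iff_integrable_sq (by fun_prop)).2 (hsq.congr_fun (fun v hv => ?_)
    measurableSet_Ioc)
  exact_mod_cast Real.rpow_mul_natCast hv.1.le p 2

theorem tendsto_sqrt_mul_rpow_nhdsGT_zero {p : ℝ} (hp : -(1 / 2) < p) :
    Tendsto (fun v : ℝ => √v * v ^ p) (𝓝[>] 0) (𝓝 0) := by
  have hpos : 0 < 1 / 2 + p := by linarith
  have hlim := ((Real.continuousAt_rpow_const 0 _ (.inr hpos.le)).tendsto.mono_left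
    (nhdsWithin_le_nhds (s := Set.Ioi 0)))
  rw [Real.zero_rpow hpos.ne'] at hlim
  refine hlim.congr' ?_
  filter_upwards [self_mem_nhdsWithin] with v hv
  rw [Real.rpow_add hv, Real.sqrt_eq_rpow]

theorem intervalIntegrable_mul_of_memLp_two {a b : ℝ} (hab : a ≤ b) {f g : ℝ → ℝ}
    (hf : MemLp f 2 (volume.restrict (Set.Ioc a b)))
    (hg : MemLp g 2 (volume.restrict (Set.Ioc a b))) :
    IntervalIntegrable (fun v => f v * g v) volume a b :=
  (intervalIntegrable_iff_integrableOn_Ioc_of_le hab).2 (hf.integrable_mul hg)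

/-- The sum of the three integrands is the derivative of `v * (f v * g v)`. -/
theorem integral_mul_add_add_eq_of_hasDerivAt_div {b : ℝ} (hb : 0 < b) {f F g G : ℝ → ℝ}
    (hf : ∀ v ∈ Set.Ioc 0 b, HasDerivAt f (F v / v) v)
    (hg : ∀ v ∈ Set.Ioc 0 b, HasDerivAt g (G v / v) v)
    (hfL : MemLp f 2 (volume.restrict (Set.Ioc 0 b)))
    (hFL : MemLp F 2 (volume.restrict (Set.Ioc 0 b)))
    (hgL : MemLp g 2 (volume.restrict (Set.Ioc 0 b)))
    (hGL : MemLp G 2 (volume.restrict (Set.Ioc 0 b)))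
    (hf0 : Tendsto (fun v => √v * f v) (𝓝[>] 0) (𝓝 0))
    (hg0 : Tendsto (fun v => √v * g v) (𝓝[>] 0) (𝓝 0)) :
    (∫ v in 0..b, f v * g v) + (∫ v in 0..b, F v * g v) + (∫ v in 0..b, f v * G v) =
      b * (f b * g b) := by
  have hfg := intervalIntegrable_mul_of_memLp_two hb.le hfL hgL
  have hFg := intervalIntegrable_mul_of_memLp_two hb.le hFL hgL
  have hfG := intervalIntegrable_mul_of_memLp_two hb.le hfL hGL
  have hderiv : ∀ v ∈ Set.Ioc 0 b,
      HasDerivAt (fun v => v * (f v * g v)) (f v * g v + F v * g v + f v * G v) v := by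
    intro v hv
    refine ((hasDerivAt_id v).mul ((hf v hv).mul (hg v hv))).congr_deriv ?_
    have hv0 : v ≠ 0 := hv.1.ne'
    simp only [id, Pi.mul_apply]
    field_simp
    ring
  have hzero : Tendsto (fun v => v * (f v * g v)) (𝓝[>] 0) (𝓝 0) := by
    have hmul := hf0.mul hg0
    rw [mul_zero] at hmul
    refine hmul.congr' ?_
    filter_upwards [self_mem_nhdsWithin] with v hv
    rw [mul_mul_mul_comm, Real.mul_self_sqrt (le_of_lt hv)]
  have hright := (hderiv b ⟨hb, le_rfl⟩).continuousAt.tendsto.mono_left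
    (nhdsWithin_le_nhds (s := Set.Iio b))
  rw [← integral_add hfg hFg, ← integral_add (hfg.add hFg) hfG,
    integral_eq_sub_of_hasDerivAt_of_tendsto hb (fun v hv => hderiv v ⟨hv.1, hv.2.le⟩)
      ((hfg.add hFg).add hfG) hzero hright,
    sub_zero]

section Muntz

variable {n : ℕ} {lam : ℕ → ℝ}

theorem sum_muntzA_div_eq_one (hinj : Set.InjOn lam (Finset.Icc 1 n)) {j : ℕ}
    (hj : j ∈ Finset.Icc 1 n) (hne : ∀ k ∈ Finset.Icc 1 n, lam j + lam k + 1 ≠ 0) :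
    ∑ k ∈ Finset.Icc 1 n, muntzA lam n k / (lam j + lam k + 1) = 1 := by
  refine Eq.trans (Finset.sum_congr rfl fun k hk => ?_)
    (sum_prod_sub_div_prod_erase_sub_eq_one hinj (fun l => -(lam l + 1))
      (Finset.card_erase_add_one hj))
  have hprod : ∏ l ∈ Finset.Icc 1 n, (lam k + lam l + 1) =
      (lam j + lam k + 1) * ∏ l ∈ (Finset.Icc 1 n).erase j, (lam k - -(lam l + 1)) := by
    rw [← Finset.mul_prod_erase _ _ hj, add_comm (lam k)]
    simp only [sub_neg_eq_add, add_assoc]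
  rw [muntzA, hprod, mul_div_assoc, mul_div_cancel_left₀ _ (hne k hk)]

theorem continuousOn_muntzK (lam : ℕ → ℝ) (n : ℕ) : ContinuousOn (muntzK lam n) (Set.Ioi 0) :=
  continuousOn_finsetSum _ fun _ _ => continuousOn_const.mul
    (continuousOn_id.rpow_const fun _ hv => .inl (ne_of_gt hv))

theorem continuousOn_muntzK_one_div_div (lam : ℕ → ℝ) (n : ℕ) :
    ContinuousOn (fun r => muntzK lam n (1 / r) / r) (Set.Ioi 0) := by
  have hne : ∀ r ∈ Set.Ioi (0 : ℝ), r ≠ 0 := fun r hr => ne_of_gt hr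
  have hinv : ContinuousOn (fun r : ℝ => 1 / r) (Set.Ioi 0) :=
    continuousOn_const.div continuousOn_id hne
  exact ((continuousOn_muntzK lam n).comp hinv fun _ hr =>
    Set.mem_Ioi.2 (one_div_pos.2 hr)).div continuousOn_id hne

theorem intervalIntegrable_muntzK_one_div_div (lam : ℕ → ℝ) (n : ℕ) {a b : ℝ} (ha : 0 < a)
    (hb : 0 < b) : IntervalIntegrable (fun r => muntzK lam n (1 / r) / r) volume a b :=
  ((continuousOn_muntzK_one_div_div lam n).mono fun _ hr =>
    (lt_min ha hb).trans_le hr.1).intervalIntegrable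

theorem memLp_two_muntzK (hpos : ∀ j ∈ Finset.Icc 1 n, -(1 / 2) < lam j) (b : ℝ) :
    MemLp (muntzK lam n) 2 (volume.restrict (Set.Ioc 0 b)) :=
  memLp_finsetSum _ fun j hj => (memLp_two_rpow (hpos j hj) b).const_mul _

theorem abs_muntzK_le {μ : ℝ} (hμ : ∀ j ∈ Finset.Icc 1 n, μ ≤ lam j) {v : ℝ}
    (hv : v ∈ Set.Ioc (0 : ℝ) 1) :
    |muntzK lam n v| ≤ (∑ j ∈ Finset.Icc 1 n, |muntzA lam n j|) * v ^ μ := by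
  rw [muntzK, Finset.sum_mul]
  refine (Finset.abs_sum_le_sum_abs _ _).trans (Finset.sum_le_sum fun j hj => ?_)
  rw [abs_mul, abs_of_pos (Real.rpow_pos_of_pos hv.1 _)]
  exact mul_le_mul_of_nonneg_left
    (Real.rpow_le_rpow_of_exponent_ge hv.1 hv.2 (hμ j hj)) (abs_nonneg _)

theorem integral_rpow_mul_muntzK {p : ℝ} (hp : ∀ k ∈ Finset.Icc 1 n, -1 < p + lam k) :
    ∫ v in (0 : ℝ)..1, v ^ p * muntzK lam n v =
      ∑ k ∈ Finset.Icc 1 n, muntzA lam n k / (p + lam k + 1) := by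
  have hexpand : ∀ v ∈ Set.Ioo (0 : ℝ) 1, v ^ p * muntzK lam n v =
      ∑ k ∈ Finset.Icc 1 n, muntzA lam n k * v ^ (p + lam k) := by
    intro v hv
    rw [muntzK, Finset.mul_sum]
    exact Finset.sum_congr rfl fun k _ => by rw [Real.rpow_add hv.1, mul_left_comm]
  rw [integral_congr_Ioo_of_le zero_le_one hexpand, intervalIntegral.integral_finsetSum fun k hk =>
    (intervalIntegrable_rpow' (hp k hk)).const_mul _]
  refine Finset.sum_congr rfl fun k hk => ?_
  have hne : p + lam k + 1 ≠ 0 := by linarith [hp k hk]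
  rw [intervalIntegral.integral_const_mul, integral_rpow (.inl (hp k hk)), Real.one_rpow,
    Real.zero_rpow hne, sub_zero, mul_one_div]

theorem muntzRho_one (lam : ℕ → ℝ) (n : ℕ) : muntzRho lam n 1 = 1 := by
  rw [muntzRho, integral_same, sub_zero]

theorem hasDerivAt_muntzRho (lam : ℕ → ℝ) (n : ℕ) {x : ℝ} (hx : 0 < x) :
    HasDerivAt (muntzRho lam n) (-(muntzK lam n (1 / x) / x)) x :=
  (integral_hasDerivAt_right (intervalIntegrable_muntzK_one_div_div lam n one_pos hx)
    ((continuousOn_muntzK_one_div_div lam n).stronglyMeasurableAtFilter isOpen_Ioi _ hx)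
    ((continuousOn_muntzK_one_div_div lam n).continuousAt (Ioi_mem_nhds hx))).const_sub 1

theorem hasDerivAt_muntzRho_one_div (lam : ℕ → ℝ) (n : ℕ) {v : ℝ} (hv : 0 < v) :
    HasDerivAt (fun v => muntzRho lam n (1 / v)) (muntzK lam n v / v) v := by
  have hinv : HasDerivAt (fun v : ℝ => 1 / v) (-(v ^ 2)⁻¹) v := by
    simpa only [one_div] using hasDerivAt_inv hv.ne'
  refine ((hasDerivAt_muntzRho lam n (one_div_pos.2 hv)).comp v hinv).congr_deriv ?_
  rw [one_div_one_div]
  field_simp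

theorem abs_muntzRho_le {μ : ℝ} (hμ0 : μ < 0) (hμ : ∀ j ∈ Finset.Icc 1 n, μ ≤ lam j) {x : ℝ}
    (hx : 1 ≤ x) :
    |muntzRho lam n x| ≤ (1 + (∑ j ∈ Finset.Icc 1 n, |muntzA lam n j|) / -μ) * x ^ (-μ) := by
  set A := ∑ j ∈ Finset.Icc 1 n, |muntzA lam n j|
  have hdiv : 0 ≤ A / -μ := div_nonneg (Finset.sum_nonneg fun _ _ => abs_nonneg _) (by linarith)
  have hone : 1 ≤ x ^ (-μ) := Real.one_le_rpow hx (by linarith)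
  have hzero : (0 : ℝ) ∉ Set.uIcc 1 x := by
    rw [Set.uIcc_of_le hx]
    exact fun h => zero_lt_one.not_ge h.1
  have hbound : ∀ r ∈ Set.Ioc 1 x, ‖muntzK lam n (1 / r) / r‖ ≤ A * r ^ (-μ - 1) := by
    intro r hr
    have hr0 : 0 < r := one_pos.trans hr.1
    have hK := abs_muntzK_le hμ ⟨one_div_pos.2 hr0, (div_le_one hr0).2 hr.1.le⟩
    rw [one_div, Real.inv_rpow hr0.le, ← Real.rpow_neg hr0.le] at hK
    rw [Real.norm_eq_abs, abs_div, abs_of_pos hr0, Real.rpow_sub_one hr0.ne', ← mul_div_assoc,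
      one_div]
    gcongr
  have hint : |∫ r in (1 : ℝ)..x, muntzK lam n (1 / r) / r| ≤ A / -μ * (x ^ (-μ) - 1) := by
    calc
      _ ≤ ∫ r in (1 : ℝ)..x, A * r ^ (-μ - 1) :=
        norm_integral_le_of_norm_le hx (.of_forall hbound)
          ((intervalIntegrable_rpow (.inr hzero)).const_mul A)
      _ = A * ((x ^ (-μ) - 1) / -μ) := by
        rw [intervalIntegral.integral_const_mul, integral_rpow (.inr ⟨by linarith, hzero⟩),
          sub_add_cancel, Real.one_rpow]
      _ = A / -μ * (x ^ (-μ) - 1) := by ring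
  calc
    |muntzRho lam n x| ≤ |1| + |∫ r in (1 : ℝ)..x, muntzK lam n (1 / r) / r| := abs_sub _ _
    _ ≤ 1 + A / -μ * (x ^ (-μ) - 1) := by rw [abs_one]; gcongr
    _ ≤ (1 + A / -μ) * x ^ (-μ) := by linarith

theorem exists_abs_muntzRho_one_div_le (hpos : ∀ j ∈ Finset.Icc 1 n, -(1 / 2) < lam j) :
    ∃ μ C : ℝ, -(1 / 2) < μ ∧ ∀ v ∈ Set.Ioc (0 : ℝ) 1, |muntzRho lam n (1 / v)| ≤ C * v ^ μ := by
  obtain ⟨μ, hlo, hhi⟩ := Order.exists_between_finsets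
    (lo := {-(1 / 2 : ℝ)}) (hi := insert 0 ((Finset.Icc 1 n).image lam)) (by
      rintro _ hx _ hy
      obtain rfl := Finset.mem_singleton.1 hx
      obtain rfl | hy := Finset.mem_insert.1 hy
      · norm_num
      · obtain ⟨j, hj, rfl⟩ := Finset.mem_image.1 hy
        exact hpos j hj)
  simp only [Finset.mem_singleton, forall_eq, Finset.mem_insert, Finset.mem_image,
    forall_eq_or_imp, forall_exists_index, and_imp, forall_apply_eq_imp_iff₂] at hlo hhi
  refine ⟨μ, 1 + (∑ j ∈ Finset.Icc 1 n, |muntzA lam n j|) / -μ, hlo, fun v hv => ?_⟩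
  have hle := abs_muntzRho_le hhi.1 (fun j hj => (hhi.2 j hj).le) ((one_le_div hv.1).2 hv.2)
  rwa [one_div, Real.inv_rpow hv.1.le, Real.rpow_neg hv.1.le, inv_inv, ← one_div] at hle

theorem memLp_two_muntzRho_one_div (hpos : ∀ j ∈ Finset.Icc 1 n, -(1 / 2) < lam j) :
    MemLp (fun v => muntzRho lam n (1 / v)) 2 (volume.restrict (Set.Ioc 0 1)) := by
  obtain ⟨μ, C, hμ, hC⟩ := exists_abs_muntzRho_one_div_le hpos
  have hcont : ContinuousOn (fun v => muntzRho lam n (1 / v)) (Set.Ioc 0 1) := fun v hv =>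
    (hasDerivAt_muntzRho_one_div lam n hv.1).continuousAt.continuousWithinAt
  refine (memLp_two_rpow hμ 1).of_le_mul (hcont.aestronglyMeasurable measurableSet_Ioc)
    (c := C) ?_
  filter_upwards [ae_restrict_mem measurableSet_Ioc] with v hv
  simpa only [Real.norm_eq_abs, abs_of_pos (Real.rpow_pos_of_pos hv.1 μ)] using hC v hv

theorem tendsto_sqrt_mul_muntzRho_one_div (hpos : ∀ j ∈ Finset.Icc 1 n, -(1 / 2) < lam j) :
    Tendsto (fun v => √v * muntzRho lam n (1 / v)) (𝓝[>] 0) (𝓝 0) := by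
  obtain ⟨μ, C, hμ, hC⟩ := exists_abs_muntzRho_one_div_le hpos
  have hlim := (tendsto_sqrt_mul_rpow_nhdsGT_zero hμ).const_mul C
  rw [mul_zero] at hlim
  refine squeeze_zero_norm' ?_ hlim
  filter_upwards [Ioc_mem_nhdsGT (zero_lt_one' ℝ)] with v hv
  rw [Real.norm_eq_abs, abs_mul, abs_of_nonneg (Real.sqrt_nonneg v), mul_left_comm]
  exact mul_le_mul_of_nonneg_left (hC v hv) (Real.sqrt_nonneg v)

theorem intervalIntegrable_rpow_mul_muntzRho (hpos : ∀ j ∈ Finset.Icc 1 n, -(1 / 2) < lam j)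
    {p : ℝ} (hp : -(1 / 2) < p) :
    IntervalIntegrable (fun v => v ^ p * muntzRho lam n (1 / v)) volume 0 1 :=
  intervalIntegrable_mul_of_memLp_two zero_le_one (memLp_two_rpow hp 1)
    (memLp_two_muntzRho_one_div hpos)

theorem intervalIntegrable_muntzRho_sq (hpos : ∀ j ∈ Finset.Icc 1 n, -(1 / 2) < lam j) :
    IntervalIntegrable (fun v => muntzRho lam n (1 / v) ^ 2) volume 0 1 :=
  (intervalIntegrable_iff_integrableOn_Ioc_of_le zero_le_one).2
    (memLp_two_muntzRho_one_div hpos).integrable_sq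

theorem add_one_mul_integral_rpow_mul_muntzRho
    (hpos : ∀ j ∈ Finset.Icc 1 n, -(1 / 2) < lam j) {p : ℝ} (hp : -(1 / 2) < p) :
    (p + 1) * ∫ v in (0 : ℝ)..1, v ^ p * muntzRho lam n (1 / v) =
      1 - ∑ k ∈ Finset.Icc 1 n, muntzA lam n k / (p + lam k + 1) := by
  have hderiv : ∀ v ∈ Set.Ioc (0 : ℝ) 1, HasDerivAt (fun v : ℝ => v ^ p) (p * v ^ p / v) v :=
    fun v hv => (Real.hasDerivAt_rpow_const (.inl hv.1.ne')).congr_deriv (by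
      rw [Real.rpow_sub_one hv.1.ne', mul_div_assoc])
  have hparts := integral_mul_add_add_eq_of_hasDerivAt_div one_pos hderiv
    (fun v hv => hasDerivAt_muntzRho_one_div lam n hv.1) (memLp_two_rpow hp 1)
    ((memLp_two_rpow hp 1).const_mul p) (memLp_two_muntzRho_one_div hpos)
    (memLp_two_muntzK hpos 1) (tendsto_sqrt_mul_rpow_nhdsGT_zero hp)
    (tendsto_sqrt_mul_muntzRho_one_div hpos)
  simp only [mul_assoc p, intervalIntegral.integral_const_mul, Real.one_rpow, div_one,
    muntzRho_one, mul_one] at hparts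
  rw [integral_rpow_mul_muntzK fun k hk => by linarith [hpos k hk]] at hparts
  linear_combination hparts

theorem integral_rpow_mul_muntzRho_eq_zero (hpos : ∀ j ∈ Finset.Icc 1 n, -(1 / 2) < lam j)
    (hinj : Set.InjOn lam (Finset.Icc 1 n)) {j : ℕ} (hj : j ∈ Finset.Icc 1 n) :
    ∫ v in (0 : ℝ)..1, v ^ lam j * muntzRho lam n (1 / v) = 0 := by
  have hmoment := add_one_mul_integral_rpow_mul_muntzRho hpos (hpos j hj)
  rw [sum_muntzA_div_eq_one hinj hj fun k hk => by linarith [hpos j hj, hpos k hk], sub_self]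
    at hmoment
  exact (mul_eq_zero.1 hmoment).resolve_left (by linarith [hpos j hj])

theorem intervalIntegrable_sum_rpow_mul_muntzRho
    (hpos : ∀ j ∈ Finset.Icc 1 n, -(1 / 2) < lam j) (c : ℕ → ℝ) :
    IntervalIntegrable
      (fun v => (∑ j ∈ Finset.Icc 1 n, c j * v ^ lam j) * muntzRho lam n (1 / v)) volume 0 1 := by
  simp only [Finset.sum_mul, mul_assoc]
  simpa only [Finset.sum_fn] using IntervalIntegrable.sum _ fun j hj =>
    (intervalIntegrable_rpow_mul_muntzRho hpos (hpos j hj)).const_mul (c j)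

theorem integral_sum_rpow_mul_muntzRho_eq_zero
    (hpos : ∀ j ∈ Finset.Icc 1 n, -(1 / 2) < lam j) (hinj : Set.InjOn lam (Finset.Icc 1 n))
    (c : ℕ → ℝ) :
    ∫ v in (0 : ℝ)..1, (∑ j ∈ Finset.Icc 1 n, c j * v ^ lam j) * muntzRho lam n (1 / v) = 0 := by
  simp only [Finset.sum_mul, mul_assoc]
  rw [integral_finsetSum fun j hj =>
    (intervalIntegrable_rpow_mul_muntzRho hpos (hpos j hj)).const_mul (c j)]
  refine Finset.sum_eq_zero fun j hj => ?_
  rw [intervalIntegral.integral_const_mul, integral_rpow_mul_muntzRho_eq_zero hpos hinj hj,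
    mul_zero]

theorem integral_muntzRho_sq_eq_one (hpos : ∀ j ∈ Finset.Icc 1 n, -(1 / 2) < lam j)
    (hinj : Set.InjOn lam (Finset.Icc 1 n)) :
    ∫ v in (0 : ℝ)..1, muntzRho lam n (1 / v) ^ 2 = 1 := by
  have horth : ∫ v in (0 : ℝ)..1, muntzK lam n v * muntzRho lam n (1 / v) = 0 :=
    integral_sum_rpow_mul_muntzRho_eq_zero hpos hinj (muntzA lam n)
  have hderiv : ∀ v ∈ Set.Ioc (0 : ℝ) 1,
      HasDerivAt (fun v => muntzRho lam n (1 / v)) (muntzK lam n v / v) v :=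
    fun v hv => hasDerivAt_muntzRho_one_div lam n hv.1
  have hL := memLp_two_muntzRho_one_div hpos
  have hKL := memLp_two_muntzK hpos 1
  have h0 := tendsto_sqrt_mul_muntzRho_one_div hpos
  have hparts := integral_mul_add_add_eq_of_hasDerivAt_div one_pos hderiv hderiv hL hKL hL hKL h0 h0
  simpa only [mul_comm (muntzRho lam n _) (muntzK lam n _), horth, add_zero, ← sq, div_one,
    muntzRho_one, one_mul, one_pow] using hparts

theorem muntzRho_div (lam : ℕ → ℝ) (n : ℕ) {a v : ℝ} (ha : 0 < a) (hv : 0 < v) :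
    muntzRho lam n (a / v) =
      muntzRho lam n (1 / v) - ∫ u in (1 : ℝ)..a, muntzK lam n (v / u) / u := by
  have hscale : ∫ u in (1 : ℝ)..a, muntzK lam n (v / u) / u =
      ∫ r in (1 / v)..(a / v), muntzK lam n (1 / r) / r := by
    rw [← inv_mul_integral_comp_div, ← intervalIntegral.integral_const_mul]
    refine integral_congr fun u _ => ?_
    simp only [one_div_div]
    field_simp
  rw [hscale, muntzRho, muntzRho, sub_sub, integral_add_adjacent_intervals
    (intervalIntegrable_muntzK_one_div_div lam n one_pos (one_div_pos.2 hv))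
    (intervalIntegrable_muntzK_one_div_div lam n (one_div_pos.2 hv) (div_pos ha hv))]

theorem integral_muntzK_div_div (lam : ℕ → ℝ) (n : ℕ) {a v : ℝ} (ha : 0 < a) (hv : 0 ≤ v) :
    ∫ u in (1 : ℝ)..a, muntzK lam n (v / u) / u = ∑ j ∈ Finset.Icc 1 n,
      (muntzA lam n j * ∫ u in (1 : ℝ)..a, (u ^ lam j * u)⁻¹) * v ^ lam j := by
  have hpos : ∀ u ∈ Set.uIcc 1 a, 0 < u := fun u hu => (lt_min one_pos ha).trans_le hu.1
  have hexpand : ∀ u ∈ Set.uIcc 1 a, muntzK lam n (v / u) / u =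
      ∑ j ∈ Finset.Icc 1 n, muntzA lam n j * v ^ lam j * (u ^ lam j * u)⁻¹ := by
    intro u hu
    rw [muntzK, Finset.sum_div]
    refine Finset.sum_congr rfl fun j _ => ?_
    rw [Real.div_rpow hv (hpos u hu).le]
    field_simp
  have hint (j : ℕ) : IntervalIntegrable (fun u : ℝ => (u ^ lam j * u)⁻¹) volume 1 a :=
    (((continuousOn_id.rpow_const fun u hu => .inl (hpos u hu).ne').mul continuousOn_id).inv₀
      fun u hu => (mul_pos (Real.rpow_pos_of_pos (hpos u hu) _) (hpos u hu)).ne').intervalIntegrable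
  rw [integral_congr hexpand, integral_finsetSum fun j _ => (hint j).const_mul _]
  exact Finset.sum_congr rfl fun j _ => by rw [intervalIntegral.integral_const_mul, mul_right_comm]

theorem muntzRho_covariance_general (hpos : ∀ j ∈ Finset.Icc 1 n, -(1 / 2) < lam j)
    (hinj : Set.InjOn lam (Finset.Icc 1 n)) {a : ℝ} (ha : 0 < a) :
    ∫ v in (0 : ℝ)..1, muntzRho lam n (a / v) * muntzRho lam n (1 / v) = 1 := by
  set c : ℕ → ℝ := fun j => muntzA lam n j * ∫ u in (1 : ℝ)..a, (u ^ lam j * u)⁻¹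
  have hsplit : ∀ v ∈ Set.Ioo (0 : ℝ) 1, muntzRho lam n (a / v) * muntzRho lam n (1 / v) =
      muntzRho lam n (1 / v) ^ 2 -
        (∑ j ∈ Finset.Icc 1 n, c j * v ^ lam j) * muntzRho lam n (1 / v) := by
    intro v hv
    rw [muntzRho_div lam n ha hv.1, integral_muntzK_div_div lam n ha hv.1.le, sub_mul, sq]
  rw [integral_congr_Ioo_of_le zero_le_one hsplit,
    integral_sub (intervalIntegrable_muntzRho_sq hpos)
      (intervalIntegrable_sum_rpow_mul_muntzRho hpos c),
    integral_muntzRho_sq_eq_one hpos hinj, integral_sum_rpow_mul_muntzRho_eq_zero hpos hinj,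
    sub_zero]

end Muntz

theorem muntzRho_covariance (n : ℕ) (hn : 1 ≤ n) (lam : ℕ → ℝ)
    (hpos : ∀ j ∈ Finset.Icc 1 n, lam j > -(1/2 : ℝ))
    (hdist : ∀ j ∈ Finset.Icc 1 n, ∀ k ∈ Finset.Icc 1 n, j ≠ k → lam j ≠ lam k) :
    ∀ a : ℝ, 1 ≤ a →
      (∫ v in (0:ℝ)..1, muntzRho lam n (a / v) * muntzRho lam n (1 / v)) = 1 := fun _ ha =>
  muntzRho_covariance_general hpos
    (fun j hj k hk => not_imp_not.1 (hdist j hj k hk)) (one_pos.trans_le ha)
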